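/- Fix λ > 0, set p_n = λ/n, and fix a > 0 and δ > 0. There exist constants C, C' > 0 such that for all sequences (k_n), (w_n) of positive reals with w_n → 0, (log n)/(w_n² k_n^{1/3}) → 0 and (log w_n)/log(1/p_n) → 0, the following holds: setting ψ_n := C' (log n)/(w_n² k_n^{1/3}) + log(C' w_n^{−5} (log(1/p_n))³)/log(1/p_n), there exists n₀ such that for all n ≥ n₀: P( T ≥ a k_n and G_{n,p_n} contains no core G* (with parameters a, w_n, C, k_n) satisfying e_{G*} ≤ (1/2)(6a(1 + 2ψ_n)k_n)^{2/3} ) ≤ δ · P(T ≥ a k_n). -/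

import Mathlib

open scoped BigOperators Classical
open Finset Filter

noncomputable section

/-- Number of edges of a finite simple graph. -/
def edgeCount {V : Type*} [Fintype V] (G : SimpleGraph V) : ℕ :=
  (Finset.univ.filter (fun e : Sym2 V => e ∈ G.edgeSet)).card

/-- Number of triangles (3-cliques) of a finite simple graph. -/
def triangleCount {V : Type*} [Fintype V] (G : SimpleGraph V) : ℕ :=
  (Finset.univ.filter (fun s : Finset V => G.IsNClique 3 s)).card

/-- Number of vertices lying in at least one triangle. -/
def vT {V : Type*} [Fintype V] (G : SimpleGraph V) : ℕ :=
  (Finset.univ.filter (fun v : V => ∃ u w : V, G.Adj v u ∧ G.Adj v w ∧ G.Adj u w)).card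

/-- Degree of a vertex. -/
def deg {V : Type*} [Fintype V] (G : SimpleGraph V) (v : V) : ℕ :=
  (Finset.univ.filter (fun u => G.Adj v u)).card

/-- Probability that the Erdős–Rényi random graph `G_{n,p}` equals the graph `G`. -/
def graphProb (n : ℕ) (p : ℝ) (G : SimpleGraph (Fin n)) : ℝ :=
  p ^ edgeCount G * (1 - p) ^ (n.choose 2 - edgeCount G)

/-- Probability of an event under the Erdős–Rényi measure. -/
def prob (n : ℕ) (p : ℝ) (A : Set (SimpleGraph (Fin n))) : ℝ :=
  ∑ G : SimpleGraph (Fin n), if G ∈ A then graphProb n p G else 0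

/-- Conditional probability `P(A | B)` (with the convention `0` when `P(B) = 0`). -/
def condProb (n : ℕ) (p : ℝ) (A B : Set (SimpleGraph (Fin n))) : ℝ :=
  prob n p (A ∩ B) / prob n p B

/-- Conditional expectation `E_G[f]` given that every edge of `G` is present. -/
def condExpect (n : ℕ) (p : ℝ) (G : SimpleGraph (Fin n)) (f : SimpleGraph (Fin n) → ℝ) : ℝ :=
  (∑ H : SimpleGraph (Fin n), if G ≤ H then graphProb n p H * f H else 0) /
    prob n p {H | G ≤ H}

/-- `E_G(T)`: conditional expectation of the number of triangles. -/
def condTri (n : ℕ) (p : ℝ) (G : SimpleGraph (Fin n)) : ℝ :=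
  condExpect n p G (fun H => (triangleCount H : ℝ))

/-- The variational quantity `Φ_{n,p,k}(a)`. -/
def Phi (n : ℕ) (p k a : ℝ) : ℝ :=
  sInf {x : ℝ | ∃ G : SimpleGraph (Fin n),
    a * k ≤ condTri n p G ∧ x = (edgeCount G : ℝ) * Real.log (1 / p)}

/-- A seed, with parameters `a, w, C, k` and edge probability `p`. -/
def IsSeed (n : ℕ) (p a w C k : ℝ) (G : SimpleGraph (Fin n)) : Prop :=
  (a - w) * k ≤ condTri n p G ∧
  (edgeCount G : ℝ) ≤ C * a * w⁻¹ * k ^ ((2 : ℝ) / 3) * Real.log (1 / p)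

/-- A core, with parameters `a, w, C, k` and edge probability `p`. -/
def IsCore (n : ℕ) (p a w C k : ℝ) (G : SimpleGraph (Fin n)) : Prop :=
  (a - 2 * w) * k ≤ condTri n p G ∧
  (edgeCount G : ℝ) ≤ C * a * w⁻¹ * k ^ ((2 : ℝ) / 3) * Real.log (1 / p) ∧
  ∀ e ∈ G.edgeSet,
    w ^ 2 * k ^ ((1 : ℝ) / 3) / (C * a * Real.log (1 / p)) ≤
      condTri n p G - condTri n p (G.deleteEdges {e})

/-- A `q`-basic graph. -/
def qBasic {V : Type*} [Fintype V] (q : ℕ) (G : SimpleGraph V) : Prop :=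
  vT G = q ∧ ∀ e ∈ G.edgeSet, vT (G.deleteEdges {e}) < q

/-- Containment of a `(δ, m)`-near-clique. -/
def containsNearClique {n : ℕ} (H : SimpleGraph (Fin n)) (δ m : ℝ) : Prop :=
  ∃ H' : SimpleGraph (Fin n), H' ≤ H ∧ 0 < edgeCount H' ∧
    ∀ v : Fin n, (∃ u, H'.Adj v u) →
      (1 - 4 * δ ^ ((1 : ℝ) / 2)) * (2 * m) ^ ((1 : ℝ) / 2) ≤ (deg H' v : ℝ)

/-- Partition function of the exponential random graph model tilted by `exp(b · V_T)`. -/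
def ergmZ (n : ℕ) (p b : ℝ) : ℝ :=
  ∑ G : SimpleGraph (Fin n), graphProb n p G * Real.exp (b * vT G)

/-- Probability of an event under the exponential random graph measure. -/
def ergmProb (n : ℕ) (p b : ℝ) (A : Set (SimpleGraph (Fin n))) : ℝ :=
  (∑ G : SimpleGraph (Fin n),
    if G ∈ A then graphProb n p G * Real.exp (b * vT G) else 0) / ergmZ n p b

/-!
Call a graph `G` a *seed* if it has few edges and `E_G T ≥ (a - w) k`. On the event that `T ≥ a k`
and there is no seed, expanding `T ^ l` as a sum over `l`-tuples of triangles and revealing the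
triangles one at a time costs at most a factor `(a - w) k` per triangle, because the union of the
triangles revealed so far is never a seed. Markov's inequality for this `l`-th moment then bounds
the probability of the event by `(1 - w / a) ^ l`, with `l` a third of the permitted number of
edges. Deleting from a seed all edges that contribute too little to `E_G T` leaves a core.

In a core, every non-isolated vertex has large degree, so a core with `m` edges lives on few
vertices and there are at most `p ^ (-ψ m)` of them. Each is present with probability `p ^ m`, so a
union bound shows that cores with more than `M` edges appear with probability at most
`n ^ 2 * p ^ (M (1 - ψ))`. Both bounds are negligible compared to `p ^ (m choose 2)` with
`m ≈ (6 a k) ^ (1 / 3)`, which is the probability of planting a clique having `a k` triangles.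
-/

section CliqueOn

variable {V : Type*} {G : SimpleGraph V}

/-- The complete graph on the vertex set `s`, as a graph on the ambient vertex type whose other
vertices are isolated. -/
def cliqueOn (s : Finset V) : SimpleGraph V :=
  (⊤ : SimpleGraph s).map (Function.Embedding.subtype (· ∈ s))

lemma cliqueOn_adj {s : Finset V} {u v : V} :
    (cliqueOn s).Adj u v ↔ u ∈ s ∧ v ∈ s ∧ u ≠ v := by
  simp only [cliqueOn, SimpleGraph.map_adj, SimpleGraph.top_adj]
  aesop

lemma cliqueOn_le_iff {s : Finset V} : cliqueOn s ≤ G ↔ G.IsClique s := by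
  simp only [SimpleGraph.le_iff_adj, cliqueOn_adj]
  exact ⟨fun h u hu v hv huv => h u v ⟨hu, hv, huv⟩, fun h u v huv => h huv.1 huv.2.1 huv.2.2⟩

end CliqueOn

section EdgeCount

variable {V : Type*} [Fintype V] {G H : SimpleGraph V}

lemma edgeCount_eq_card_edgeFinset (G : SimpleGraph V) : edgeCount G = #G.edgeFinset := by
  rw [edgeCount, SimpleGraph.edgeFinset]
  congr 1
  ext e
  simp only [mem_filter, mem_univ, true_and, Set.mem_toFinset]

lemma edgeCount_mono (h : G ≤ H) : edgeCount G ≤ edgeCount H := by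
  simpa only [edgeCount_eq_card_edgeFinset] using
    card_le_card (SimpleGraph.edgeFinset_subset_edgeFinset.2 h)

@[simp]
lemma edgeCount_eq_zero : edgeCount G = 0 ↔ G = ⊥ := by
  rw [edgeCount_eq_card_edgeFinset, card_eq_zero, SimpleGraph.edgeFinset_eq_empty]

lemma edgeCount_top : edgeCount (⊤ : SimpleGraph V) = (Fintype.card V).choose 2 := by
  rw [edgeCount_eq_card_edgeFinset]
  convert SimpleGraph.card_edgeFinset_top_eq_card_choose_two (V := V)

lemma edgeCount_eq_ncard_edgeSet (G : SimpleGraph V) : edgeCount G = G.edgeSet.ncard := by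
  rw [edgeCount_eq_card_edgeFinset, ← SimpleGraph.coe_edgeFinset, Set.ncard_coe_finset]

lemma edgeCount_sup (G H : SimpleGraph V) :
    edgeCount (G ⊔ H) = edgeCount G + edgeCount (H \ G) := by
  simp only [edgeCount_eq_ncard_edgeSet, ← sup_sdiff_self_right G H, SimpleGraph.edgeSet_sup]
  exact Set.ncard_union_eq (SimpleGraph.disjoint_edgeSet.2 disjoint_sdiff_self_right)

lemma edgeCount_deleteEdges_singleton {e : Sym2 V} (he : e ∈ G.edgeSet) :
    edgeCount (G.deleteEdges {e}) + 1 = edgeCount G := by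
  simp only [edgeCount_eq_ncard_edgeSet, SimpleGraph.edgeSet_deleteEdges]
  exact Set.ncard_sdiff_singleton_add_one he

lemma sum_degree_eq_two_mul_edgeCount (G : SimpleGraph V) :
    ∑ v, G.degree v = 2 * edgeCount G := by
  rw [G.sum_degrees_eq_twice_card_edges, edgeCount_eq_card_edgeFinset]

lemma sum_le_pow_edgeCount_mul_pow [DecidableEq V] {R : Type*} [CommSemiring R] (G : SimpleGraph V)
    [DecidablePred (· ≤ G)] (x y : R) :
    ∑ H with H ≤ G, x ^ edgeCount H * y ^ (edgeCount G - edgeCount H) =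
      (x + y) ^ edgeCount G := by
  rw [edgeCount_eq_card_edgeFinset G, ← sum_pow_mul_eq_add_pow]
  refine sum_nbij (fun H => H.edgeFinset) (fun H hH => ?_) (fun H _ H' _ h => ?_)
    (fun S hS => ?_) (fun H _ => ?_)
  · simpa using hH
  · simpa using h
  · have hSG : (S : Set (Sym2 V)) ⊆ G.edgeSet := by simpa [Set.subset_def, subset_iff] using hS
    refine ⟨SimpleGraph.fromEdgeSet S, ?_, ?_⟩
    · simpa using Set.sdiff_subset.trans hSG
    · ext e
      simp only [SimpleGraph.mem_edgeFinset, SimpleGraph.edgeSet_fromEdgeSet, Set.mem_sdiff,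
        mem_coe, and_iff_left_iff_imp]
      exact fun he => G.not_isDiag_of_mem_edgeSet (hSG he)
  · rw [edgeCount_eq_card_edgeFinset]

lemma edgeCount_cliqueOn (s : Finset V) : edgeCount (cliqueOn s) = (#s).choose 2 := by
  rw [edgeCount_eq_card_edgeFinset, ← Fintype.card_coe s,
    ← SimpleGraph.card_edgeFinset_top_eq_card_choose_two,
    ← SimpleGraph.card_edgeFinset_map (Function.Embedding.subtype (· ∈ s)) ⊤]
  congr!

end EdgeCount

section Prob

variable {n : ℕ} {p : ℝ} {A B : Set (SimpleGraph (Fin n))}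

lemma graphProb_nonneg (hp : 0 ≤ p) (hp1 : p ≤ 1) (G : SimpleGraph (Fin n)) :
    0 ≤ graphProb n p G :=
  mul_nonneg (pow_nonneg hp _) (pow_nonneg (sub_nonneg.2 hp1) _)

lemma prob_eq_sum_filter : prob n p A = ∑ H with H ∈ A, graphProb n p H := by
  rw [prob, sum_filter]

lemma prob_empty : prob n p ∅ = 0 := by
  simp only [prob, Set.mem_empty_iff_false, if_false, sum_const_zero]

lemma prob_mono (hp : 0 ≤ p) (hp1 : p ≤ 1) (h : A ⊆ B) : prob n p A ≤ prob n p B := by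
  simp only [prob_eq_sum_filter]
  exact sum_le_sum_of_subset_of_nonneg (monotone_filter_right _ fun _ _ hA => h hA)
    fun G _ _ => graphProb_nonneg hp hp1 G

lemma prob_biUnion_le {ι : Type*} (hp : 0 ≤ p) (hp1 : p ≤ 1) (S : Finset ι)
    (A : ι → Set (SimpleGraph (Fin n))) :
    prob n p (⋃ i ∈ S, A i) ≤ ∑ i ∈ S, prob n p (A i) := by
  simp only [prob]
  rw [sum_comm]
  refine sum_le_sum fun H _ => ?_
  have hnonneg : ∀ i ∈ S, 0 ≤ if H ∈ A i then graphProb n p H else 0 := fun i _ =>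
    ite_nonneg (graphProb_nonneg hp hp1 H) le_rfl
  split_ifs with h
  · obtain ⟨i, hi, hH⟩ := Set.mem_iUnion₂.1 h
    simpa only [if_pos hH] using single_le_sum hnonneg hi
  · exact sum_nonneg hnonneg

lemma prob_union_le (hp : 0 ≤ p) (hp1 : p ≤ 1) (A B : Set (SimpleGraph (Fin n))) :
    prob n p (A ∪ B) ≤ prob n p A + prob n p B := by
  rw [prob, prob, prob, ← sum_add_distrib]
  refine sum_le_sum fun H _ => ?_
  have hH := graphProb_nonneg hp hp1 H
  by_cases hA : H ∈ A <;> by_cases hB : H ∈ B <;> simp [hA, hB, hH]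

lemma prob_Ici (n : ℕ) (p : ℝ) (G : SimpleGraph (Fin n)) :
    prob n p {H | G ≤ H} = p ^ edgeCount G := by
  have hcompl : edgeCount G + edgeCount Gᶜ = n.choose 2 := by
    rw [← top_sdiff, ← edgeCount_sup, sup_top_eq, edgeCount_top, Fintype.card_fin]
  have hbij : ∑ H with G ≤ H, graphProb n p H =
      ∑ D with D ≤ Gᶜ, p ^ edgeCount G *
        (p ^ edgeCount D * (1 - p) ^ (edgeCount Gᶜ - edgeCount D)) := by
    refine sum_nbij' (· \ G) (G ⊔ ·) ?_ ?_ ?_ ?_ fun H hH => ?_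
    · exact fun H _ => mem_filter.2 ⟨mem_univ _, by rw [sdiff_eq]; exact inf_le_right⟩
    · exact fun D _ => mem_filter.2 ⟨mem_univ _, le_sup_left⟩
    · exact fun H hH => sup_sdiff_cancel_right (mem_filter.1 hH).2
    · intro D hD
      have hdisj : Disjoint D G := le_compl_iff_disjoint_right.1 (mem_filter.1 hD).2
      simp only [sup_sdiff_left_self, hdisj.sdiff_eq_left]
    · have hsplit := edgeCount_sup G H
      rw [sup_of_le_right (mem_filter.1 hH).2] at hsplit
      rw [graphProb, hsplit, ← hcompl, Nat.add_sub_add_left, pow_add, mul_assoc]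
  rw [prob_eq_sum_filter]
  simp only [Set.mem_ofPred_eq, hbij]
  rw [← mul_sum, sum_le_pow_edgeCount_mul_pow, add_sub_cancel, one_pow, mul_one]

end Prob

section Triangles

variable {n : ℕ} {p : ℝ}

lemma triangleCount_eq_sum {V : Type*} [Fintype V] (H : SimpleGraph V) :
    triangleCount H = ∑ s ∈ powersetCard 3 univ, if cliqueOn s ≤ H then 1 else 0 := by
  rw [← card_filter, triangleCount]
  congr 1
  ext s
  simp only [mem_filter, mem_univ, true_and, mem_powersetCard_univ, cliqueOn_le_iff,
    SimpleGraph.isNClique_iff, and_comm]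

lemma choose_three_le_triangleCount {V : Type*} [Fintype V] {H : SimpleGraph V} {s : Finset V}
    (hs : cliqueOn s ≤ H) : (#s).choose 3 ≤ triangleCount H := by
  rw [← card_powersetCard]
  refine card_le_card fun t ht => mem_filter.2 ⟨mem_univ _, ?_⟩
  obtain ⟨hts, ht⟩ := mem_powersetCard.1 ht
  exact ⟨(cliqueOn_le_iff.1 hs).subset (coe_subset.2 hts), ht⟩

lemma triangleCount_le {V : Type*} [Fintype V] (H : SimpleGraph V) :
    triangleCount H ≤ (Fintype.card V).choose 3 := by
  rw [triangleCount_eq_sum, ← card_filter, ← card_univ, ← card_powersetCard]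
  exact card_filter_le _ _

lemma pow_edgeCount_mul_condTri (hp : p ≠ 0) (G : SimpleGraph (Fin n)) :
    p ^ edgeCount G * condTri n p G =
      ∑ s ∈ powersetCard 3 univ, p ^ edgeCount (G ⊔ cliqueOn s) := by
  rw [condTri, condExpect, prob_Ici, mul_div_cancel₀ _ (pow_ne_zero _ hp)]
  simp only [← prob_Ici n p, prob]
  rw [sum_comm]
  refine sum_congr rfl fun H _ => ?_
  by_cases hGH : G ≤ H
  · simp only [triangleCount_eq_sum, Set.mem_ofPred_eq, sup_le_iff, hGH, true_and, if_true,
      Nat.cast_sum, Nat.cast_ite, Nat.cast_one, Nat.cast_zero, mul_sum, mul_ite, mul_one, mul_zero]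
  · simp only [Set.mem_ofPred_eq, sup_le_iff, hGH, false_and, if_false, sum_const_zero]

lemma condTri_eq_sum (hp : p ≠ 0) (G : SimpleGraph (Fin n)) :
    condTri n p G = ∑ s ∈ powersetCard 3 univ, p ^ edgeCount (cliqueOn s \ G) := by
  refine mul_left_cancel₀ (pow_ne_zero (edgeCount G) hp) ?_
  simp only [pow_edgeCount_mul_condTri hp, edgeCount_sup, pow_add, mul_sum]

end Triangles

section Seeds

variable {n : ℕ} {p a w C k K M : ℝ}

lemma sum_mul_triangleCount_pow_succ (A : Set (SimpleGraph (Fin n))) (U : SimpleGraph (Fin n))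
    (l : ℕ) :
    ∑ H with U ≤ H ∧ H ∈ A, graphProb n p H * (triangleCount H : ℝ) ^ (l + 1) =
      ∑ s ∈ powersetCard 3 univ,
        ∑ H with U ⊔ cliqueOn s ≤ H ∧ H ∈ A, graphProb n p H * (triangleCount H : ℝ) ^ l := by
  have hsucc (H : SimpleGraph (Fin n)) : graphProb n p H * (triangleCount H : ℝ) ^ (l + 1) =
      ∑ s ∈ powersetCard 3 univ,
        if cliqueOn s ≤ H then graphProb n p H * (triangleCount H : ℝ) ^ l else 0 := by
    have hcard : (triangleCount H : ℝ) =
        ∑ s ∈ powersetCard 3 univ, if cliqueOn s ≤ H then 1 else 0 := by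
      exact_mod_cast triangleCount_eq_sum H
    rw [pow_succ, ← mul_assoc, mul_comm _ (triangleCount H : ℝ), hcard, sum_mul]
    simp only [ite_mul, one_mul, zero_mul]
  simp only [hsucc]
  rw [sum_comm]
  refine sum_congr rfl fun s _ => ?_
  rw [← sum_filter, filter_filter]
  simp only [sup_le_iff, and_right_comm]

lemma sum_mul_triangleCount_pow_le (hp : 0 < p) (hp1 : p ≤ 1) (hM : 0 ≤ M) {b : ℕ}
    {A : Set (SimpleGraph (Fin n))}
    (hA : ∀ H ∈ A, ∀ G ≤ H, edgeCount G ≤ b → condTri n p G ≤ M) (l : ℕ)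
    (U : SimpleGraph (Fin n)) (hU : edgeCount U + 3 * l ≤ b) :
    ∑ H with U ≤ H ∧ H ∈ A, graphProb n p H * (triangleCount H : ℝ) ^ l ≤
      p ^ edgeCount U * M ^ l := by
  induction l generalizing U with
  | zero =>
    simp only [pow_zero, mul_one]
    rw [← prob_Ici n p U, prob_eq_sum_filter]
    exact sum_le_sum_of_subset_of_nonneg (monotone_filter_right _ fun _ _ h => h.1)
      fun H _ _ => graphProb_nonneg hp.le hp1 H
  | succ l ih =>
    obtain hempty | ⟨H₀, hH₀⟩ :=
      (univ.filter fun H : SimpleGraph (Fin n) => U ≤ H ∧ H ∈ A).eq_empty_or_nonempty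
    · rw [hempty, sum_empty]
      positivity
    obtain ⟨-, hUH₀, hH₀A⟩ := mem_filter.1 hH₀
    have hcondTri : condTri n p U ≤ M := hA H₀ hH₀A U hUH₀ (by omega)
    have hedges {s : Finset (Fin n)} (hs : s ∈ powersetCard 3 univ) :
        edgeCount (U ⊔ cliqueOn s) + 3 * l ≤ b := by
      have hclique := edgeCount_mono (sdiff_le : cliqueOn s \ U ≤ cliqueOn s)
      rw [edgeCount_cliqueOn, (mem_powersetCard.1 hs).2, Nat.choose_succ_self_right] at hclique
      rw [edgeCount_sup]
      omega
    calc _ = ∑ s ∈ powersetCard 3 univ, ∑ H with U ⊔ cliqueOn s ≤ H ∧ H ∈ A,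
              graphProb n p H * (triangleCount H : ℝ) ^ l := sum_mul_triangleCount_pow_succ A U l
      _ ≤ ∑ s ∈ powersetCard 3 univ, p ^ edgeCount (U ⊔ cliqueOn s) * M ^ l :=
        sum_le_sum fun s hs => ih _ (hedges hs)
      _ = p ^ edgeCount U * condTri n p U * M ^ l := by
        rw [← sum_mul, pow_edgeCount_mul_condTri hp.ne']
      _ ≤ p ^ edgeCount U * M * M ^ l := by gcongr
      _ = p ^ edgeCount U * M ^ (l + 1) := by ring

lemma prob_le_div_pow_of_condTri_le (hp : 0 < p) (hp1 : p ≤ 1) (hM : 0 ≤ M) (hK : 0 < K) {l : ℕ}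
    {A : Set (SimpleGraph (Fin n))} (hAK : ∀ H ∈ A, K ≤ triangleCount H)
    (hAM : ∀ H ∈ A, ∀ G ≤ H, edgeCount G ≤ 3 * l → condTri n p G ≤ M) :
    prob n p A ≤ (M / K) ^ l := by
  have hbot : edgeCount (⊥ : SimpleGraph (Fin n)) = 0 := edgeCount_eq_zero.2 rfl
  have hmoment := sum_mul_triangleCount_pow_le hp hp1 hM hAM l ⊥ (by rw [hbot, zero_add])
  rw [hbot, pow_zero, one_mul] at hmoment
  rw [div_pow, le_div_iff₀ (pow_pos hK l), prob_eq_sum_filter, sum_mul]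
  calc ∑ H with H ∈ A, graphProb n p H * K ^ l
      ≤ ∑ H with H ∈ A, graphProb n p H * (triangleCount H : ℝ) ^ l := by
        refine sum_le_sum fun H hH => ?_
        gcongr
        · exact graphProb_nonneg hp.le hp1 H
        · exact hAK H (mem_filter.1 hH).2
    _ = ∑ H with ⊥ ≤ H ∧ H ∈ A, graphProb n p H * (triangleCount H : ℝ) ^ l := by
        simp only [bot_le, true_and]
    _ ≤ M ^ l := hmoment

lemma prob_no_isSeed_le (hp : 0 < p) (hp1 : p ≤ 1) (ha : 0 < a) (hw : 0 < w) (hwa : w ≤ a)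
    (hC : 0 ≤ C) (hk : 0 < k) :
    prob n p {H | a * k ≤ triangleCount H ∧ ¬ ∃ G ≤ H, IsSeed n p a w C k G} ≤
      Real.exp 1 * p ^ (C / 3 * k ^ ((2 : ℝ) / 3)) := by
  set B := C * a * w⁻¹ * k ^ ((2 : ℝ) / 3) * Real.log (1 / p) with hB
  have hlog : 0 ≤ Real.log (1 / p) := Real.log_nonneg (one_le_one_div hp hp1)
  have hB0 : 0 ≤ B := by positivity
  set l := ⌊B / 3⌋₊
  have hlB : ((3 * l : ℕ) : ℝ) ≤ B := by
    push_cast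
    linarith [Nat.floor_le (div_nonneg hB0 zero_le_three)]
  have hcondTri (H : SimpleGraph (Fin n)) (hseed : ¬ ∃ G ≤ H, IsSeed n p a w C k G)
      (G : SimpleGraph (Fin n)) (hGH : G ≤ H) (hG : edgeCount G ≤ 3 * l) :
      condTri n p G ≤ (a - w) * k := by
    by_contra! hlt
    exact hseed ⟨G, hGH, hlt.le, (Nat.cast_le.2 hG).trans hlB⟩
  have hratio : (a - w) * k / (a * k) ≤ Real.exp (-(w / a)) := by
    rw [mul_div_mul_right _ _ hk.ne', sub_div, div_self ha.ne']
    linarith [Real.add_one_le_exp (-(w / a))]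
  have hexponent : C / 3 * k ^ ((2 : ℝ) / 3) * Real.log (1 / p) - 1 ≤ w / a * l := by
    calc C / 3 * k ^ ((2 : ℝ) / 3) * Real.log (1 / p) - 1 ≤ w / a * (B / 3 - 1) := by
          rw [mul_sub, mul_one, hB]
          gcongr ?_ - ?_
          · exact le_of_eq (by field_simp)
          · exact (div_le_one ha).2 hwa
      _ ≤ w / a * l := by gcongr; exact (Nat.sub_one_lt_floor _).le
  calc _ ≤ ((a - w) * k / (a * k)) ^ l :=
        prob_le_div_pow_of_condTri_le hp hp1 (mul_nonneg (sub_nonneg.2 hwa) hk.le)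
          (by positivity) (fun H hH => hH.1) fun H hH => hcondTri H hH.2
    _ ≤ Real.exp (-(w / a)) ^ l := by
      gcongr
    _ = Real.exp (-(w / a * l)) := by rw [← Real.exp_nat_mul, mul_neg, mul_comm]
    _ ≤ Real.exp (1 + Real.log p * (C / 3 * k ^ ((2 : ℝ) / 3))) := by
      rw [one_div, Real.log_inv] at hexponent
      gcongr
      linarith
    _ = Real.exp 1 * p ^ (C / 3 * k ^ ((2 : ℝ) / 3)) := by
      rw [Real.exp_add, Real.rpow_def_of_pos hp]

end Seeds

section Cores

variable {n : ℕ} {p a w C k : ℝ}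

lemma exists_le_forall_le_sub_deleteEdges {V : Type*} [Fintype V] (f : SimpleGraph V → ℝ)
    {τ : ℝ} (hτ : 0 ≤ τ) (G : SimpleGraph V) :
    ∃ G' ≤ G, f G - τ * edgeCount G ≤ f G' ∧
      ∀ e ∈ G'.edgeSet, τ ≤ f G' - f (G'.deleteEdges {e}) := by
  obtain ⟨G', hG', hmax⟩ := exists_max_image {G' | G' ≤ G} (fun G' => f G' - τ * edgeCount G')
    ⟨G, mem_filter.2 ⟨mem_univ G, le_rfl⟩⟩
  have hle : G' ≤ G := (mem_filter.1 hG').2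
  refine ⟨G', hle, ?_, fun e he => ?_⟩
  · have hG := hmax G (mem_filter.2 ⟨mem_univ G, le_rfl⟩)
    have hnonneg : 0 ≤ τ * edgeCount G' := by positivity
    linarith
  · have hdel := hmax (G'.deleteEdges {e})
      (mem_filter.2 ⟨mem_univ _, (G'.deleteEdges_le _).trans hle⟩)
    rw [← edgeCount_deleteEdges_singleton he] at hdel
    push_cast at hdel
    linarith

lemma IsSeed.exists_le_isCore {G : SimpleGraph (Fin n)} (hp : 0 < p) (hp1 : p ≤ 1) (ha : 0 < a)
    (hw : 0 < w) (hC : 0 < C) (hk : 0 < k) (hG : IsSeed n p a w C k G) :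
    ∃ G' ≤ G, IsCore n p a w C k G' := by
  obtain ⟨htri, hedges⟩ := hG
  set L := Real.log (1 / p)
  have hL : 0 ≤ L := Real.log_nonneg (one_le_one_div hp hp1)
  set τ := w ^ 2 * k ^ ((1 : ℝ) / 3) / (C * a * L)
  have hτ : 0 ≤ τ := by positivity
  obtain ⟨G', hle, hloss, hgain⟩ := exists_le_forall_le_sub_deleteEdges (condTri n p) hτ G
  have htotal : τ * edgeCount G ≤ w * k := by
    calc τ * edgeCount G ≤ τ * (C * a * w⁻¹ * k ^ ((2 : ℝ) / 3) * L) := by gcongr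
      _ = (L / L) * (w * (k ^ ((1 : ℝ) / 3) * k ^ ((2 : ℝ) / 3))) := by
        simp only [τ]
        field_simp
      _ = (L / L) * (w * k) := by
        rw [← Real.rpow_add hk]
        norm_num
      _ ≤ w * k := mul_le_of_le_one_left (by positivity) (div_self_le_one L)
  refine ⟨G', hle, by linarith, ?_, hgain⟩
  exact (Nat.cast_le.2 (edgeCount_mono hle)).trans hedges

lemma pow_edgeCount_cliqueOn_sdiff_le (hp : 0 ≤ p) (hp1 : p ≤ 1) (G : SimpleGraph (Fin n))
    {s : Finset (Fin n)} {u x : Fin n} (hu : u ∈ s) (hx : x ∈ s) (hux : u ≠ x) :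
    p ^ edgeCount (cliqueOn s \ G) ≤ (if G.Adj u x then 1 else 0) + p := by
  split_ifs with hadj
  · linarith [pow_le_one₀ (n := edgeCount (cliqueOn s \ G)) hp hp1]
  · rw [zero_add]
    refine pow_le_of_le_one hp hp1 fun hzero => ?_
    have hmem : (cliqueOn s \ G).Adj u x := ⟨cliqueOn_adj.2 ⟨hu, hx, hux⟩, hadj⟩
    simp only [edgeCount_eq_zero.1 hzero, SimpleGraph.bot_adj] at hmem

lemma sdiff_deleteEdges_singleton_eq {V : Type*} {G H : SimpleGraph V} {e : Sym2 V}
    (he : e ∉ H.edgeSet) : H \ G.deleteEdges {e} = H \ G := by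
  rw [← SimpleGraph.edgeSet_inj]
  simp only [SimpleGraph.edgeSet_sdiff, SimpleGraph.edgeSet_deleteEdges, sdiff_sdiff_right']
  exact sup_of_le_left ((Set.inter_singleton_eq_empty.2 he).trans_le (Set.empty_subset _))

lemma exists_eq_insert_insert_singleton {α : Type*} [DecidableEq α] {s : Finset α} {u v : α}
    (hs : #s = 3) (hu : u ∈ s) (hv : v ∈ s) (huv : u ≠ v) :
    ∃ x, x ≠ u ∧ x ≠ v ∧ s = {u, v, x} := by
  have hv' : v ∈ s.erase u := mem_erase.2 ⟨huv.symm, hv⟩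
  have hcard : #((s.erase u).erase v) = 1 := by
    rw [card_erase_of_mem hv', card_erase_of_mem hu, hs]
  obtain ⟨x, hx⟩ := card_eq_one.1 hcard
  have hxs : x ∈ (s.erase u).erase v := hx ▸ mem_singleton_self x
  refine ⟨x, (mem_erase.1 (mem_erase.1 hxs).2).1, (mem_erase.1 hxs).1, ?_⟩
  rw [← hx, insert_erase hv', insert_erase hu]

lemma condTri_sub_deleteEdges_le_sum (hp : 0 < p) (G : SimpleGraph (Fin n)) (u v : Fin n) :
    condTri n p G - condTri n p (G.deleteEdges {s(u, v)}) ≤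
      ∑ x with x ≠ u ∧ x ≠ v, p ^ edgeCount (cliqueOn {u, v, x} \ G) := by
  have hterm (s : Finset (Fin n)) : p ^ edgeCount (cliqueOn s \ G) -
      p ^ edgeCount (cliqueOn s \ G.deleteEdges {s(u, v)}) ≤
        if (cliqueOn s).Adj u v then p ^ edgeCount (cliqueOn s \ G) else 0 := by
    split_ifs with huv
    · exact sub_le_self _ (by positivity)
    · rw [sdiff_deleteEdges_singleton_eq huv, sub_self]
  have hsub : {s ∈ powersetCard 3 (univ : Finset (Fin n)) | (cliqueOn s).Adj u v} ⊆
      ({x | x ≠ u ∧ x ≠ v} : Finset (Fin n)).image fun x => {u, v, x} := by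
    intro s hs
    obtain ⟨hs, huv⟩ := mem_filter.1 hs
    obtain ⟨hu, hv, hne⟩ := cliqueOn_adj.1 huv
    obtain ⟨x, hxu, hxv, rfl⟩ :=
      exists_eq_insert_insert_singleton (mem_powersetCard_univ.1 hs) hu hv hne
    exact mem_image.2 ⟨x, mem_filter.2 ⟨mem_univ x, hxu, hxv⟩, rfl⟩
  rw [condTri_eq_sum hp.ne', condTri_eq_sum hp.ne', ← sum_sub_distrib]
  refine (sum_le_sum fun s _ => hterm s).trans ?_
  rw [← sum_filter]
  refine (sum_le_sum_of_subset_of_nonneg hsub fun _ _ _ => by positivity).trans ?_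
  exact sum_image_le_of_nonneg fun _ _ => by positivity

lemma condTri_sub_deleteEdges_le (hp : 0 < p) (hp1 : p ≤ 1) (G : SimpleGraph (Fin n))
    (u v : Fin n) :
    condTri n p G - condTri n p (G.deleteEdges {s(u, v)}) ≤ G.degree u + p * n := by
  have hdegree : (G.degree u : ℝ) = ∑ x : Fin n, if G.Adj u x then 1 else 0 := by
    rw [sum_boole, ← G.card_neighborFinset_eq_degree,
      SimpleGraph.neighborFinset_eq_filter G]
  calc _ ≤ ∑ x with x ≠ u ∧ x ≠ v, p ^ edgeCount (cliqueOn {u, v, x} \ G) :=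
        condTri_sub_deleteEdges_le_sum hp G u v
    _ ≤ ∑ x with x ≠ u ∧ x ≠ v, ((if G.Adj u x then 1 else 0) + p) := by
      refine sum_le_sum fun x hx => pow_edgeCount_cliqueOn_sdiff_le hp.le hp1 G ?_ ?_ ?_
      · exact mem_insert_self u _
      · exact mem_insert_of_mem (mem_insert_of_mem (mem_singleton_self x))
      · exact (mem_filter.1 hx).2.1.symm
    _ ≤ ∑ x, ((if G.Adj u x then 1 else 0) + p) :=
      sum_le_sum_of_subset_of_nonneg (filter_subset _ _) fun x _ _ => by positivity
    _ = G.degree u + p * n := by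
      rw [sum_add_distrib, ← hdegree, sum_const, card_univ, Fintype.card_fin, nsmul_eq_mul,
        mul_comm p]

lemma IsCore.le_degree {G : SimpleGraph (Fin n)} (hp : 0 < p) (hp1 : p ≤ 1)
    (hG : IsCore n p a w C k G) {u : Fin n} (hu : u ∈ G.support) :
    w ^ 2 * k ^ ((1 : ℝ) / 3) / (C * a * Real.log (1 / p)) - p * n ≤ G.degree u := by
  obtain ⟨v, huv⟩ := hu
  have hgain := hG.2.2 s(u, v) huv
  have hloss := condTri_sub_deleteEdges_le hp hp1 G u v
  linarith

end Cores

section Counting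

variable {V : Type*} [Fintype V]

lemma ncard_support_mul_le {t : ℝ} {G : SimpleGraph V} (h : ∀ u ∈ G.support, t ≤ G.degree u) :
    G.support.ncard * t ≤ 2 * edgeCount G := by
  calc G.support.ncard * t = ∑ _u ∈ G.support.toFinset, t := by
        rw [sum_const, nsmul_eq_mul, Set.ncard_eq_toFinset_card']
    _ ≤ ∑ u ∈ G.support.toFinset, (G.degree u : ℝ) :=
      sum_le_sum fun u hu => h u (Set.mem_toFinset.1 hu)
    _ ≤ ∑ u, (G.degree u : ℝ) :=
      sum_le_sum_of_subset_of_nonneg (subset_univ _) fun _ _ _ => Nat.cast_nonneg _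
    _ = 2 * edgeCount G := by exact_mod_cast sum_degree_eq_two_mul_edgeCount G

lemma card_filter_le_edgeCount_eq_le [DecidableEq V] (K : SimpleGraph V) (m : ℕ) :
    #{G | G ≤ K ∧ edgeCount G = m} ≤ (edgeCount K).choose m := by
  rw [edgeCount_eq_card_edgeFinset K, ← card_powersetCard]
  refine card_le_card_of_injOn (fun G => G.edgeFinset) (fun G hG => ?_) fun G _ H _ h => ?_
  · obtain ⟨-, hle, hcard⟩ := mem_filter.1 hG
    rw [edgeCount_eq_card_edgeFinset] at hcard
    exact mem_powersetCard.2 ⟨SimpleGraph.edgeFinset_subset_edgeFinset.2 hle, hcard⟩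
  · exact SimpleGraph.edgeFinset_inj.1 h

lemma exists_image_univ_eq {α : Type*} [DecidableEq α] {s : Finset α} (hs : s.Nonempty) {v : ℕ}
    (hv : #s ≤ v) :
    ∃ f : Fin v → α, univ.image f = s := by
  have : Nonempty s := hs.to_subtype
  obtain ⟨g⟩ : Nonempty (s ↪ Fin v) :=
    Function.Embedding.nonempty_of_card_le (by rwa [Fintype.card_coe, Fintype.card_fin])
  refine ⟨Subtype.val ∘ Function.invFun g, ?_⟩
  rw [← image_image, image_univ_of_surjective (Function.invFun_surjective g.injective),
    univ_eq_attach, attach_image_val]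

lemma card_filter_edgeCount_eq_ncard_support_le [DecidableEq V] {m : ℕ} (hm : m ≠ 0) (v : ℕ) :
    #{G : SimpleGraph V | edgeCount G = m ∧ G.support.ncard ≤ v} ≤
      Fintype.card V ^ v * (v.choose 2).choose m := by
  have hsub : ({G | edgeCount G = m ∧ G.support.ncard ≤ v} : Finset (SimpleGraph V)) ⊆
      univ.biUnion fun f : Fin v → V => {G | G ≤ cliqueOn (univ.image f) ∧ edgeCount G = m} := by
    intro G hG
    obtain ⟨-, hGm, hGv⟩ := mem_filter.1 hG
    rw [Set.ncard_eq_toFinset_card'] at hGv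
    have hne : G.support.toFinset.Nonempty := by
      rw [Set.toFinset_nonempty, Set.nonempty_iff_ne_empty, ne_eq, SimpleGraph.support_eq_bot_iff]
      exact fun hbot => hm (hGm ▸ edgeCount_eq_zero.2 hbot)
    obtain ⟨f, hf⟩ := exists_image_univ_eq hne hGv
    refine mem_biUnion.2 ⟨f, mem_univ f, mem_filter.2 ⟨mem_univ G, ?_, hGm⟩⟩
    intro x y hxy
    simp only [cliqueOn_adj, hf, Set.mem_toFinset]
    exact ⟨⟨y, hxy⟩, ⟨x, hxy.symm⟩, hxy.ne⟩
  have hcard : Fintype.card V ^ v = #(univ : Finset (Fin v → V)) := by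
    rw [card_univ, Fintype.card_fun, Fintype.card_fin]
  rw [hcard]
  refine (card_le_card hsub).trans (card_biUnion_le_card_mul _ _ _ fun f _ => ?_)
  refine (card_filter_le_edgeCount_eq_le _ m).trans (Nat.choose_le_choose m ?_)
  rw [edgeCount_cliqueOn]
  exact Nat.choose_le_choose 2 (card_image_le.trans_eq (card_fin v))

lemma choose_le_exp_one_mul_div_pow (N m : ℕ) :
    (N.choose m : ℝ) ≤ (Real.exp 1 * N / m) ^ m := by
  have hm : (0 : ℝ) < (m : ℝ) ^ m := by exact_mod_cast Nat.pow_self_pos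
  have hfactorial : (m : ℝ) ^ m ≤ Real.exp m * m.factorial :=
    (div_le_iff₀ (by positivity)).1 (Real.pow_div_factorial_le_exp m m.cast_nonneg m)
  calc (N.choose m : ℝ) ≤ N ^ m / m.factorial := Nat.choose_le_pow_div m N
    _ ≤ Real.exp m * N ^ m / m ^ m := by
      rw [div_le_div_iff₀ (by positivity) hm]
      calc (N : ℝ) ^ m * m ^ m ≤ N ^ m * (Real.exp m * m.factorial) := by gcongr
        _ = Real.exp m * N ^ m * m.factorial := by ring
    _ = (Real.exp 1 * N / m) ^ m := by rw [div_pow, mul_pow, Real.exp_one_pow]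

end Counting

section CoreCount

variable {n : ℕ} {p a w C C' k : ℝ}

/-- The error term `ψ_n` governing both the number of cores and the size of a minimal core; `C'` is
the absolute constant that the theorem asserts to exist. -/
def coreSlack (n : ℕ) (p w k C' : ℝ) : ℝ :=
  C' * Real.log n / (w ^ 2 * k ^ ((1 : ℝ) / 3)) +
    Real.log (C' * w ^ (-(5 : ℝ)) * Real.log (1 / p) ^ 3) / Real.log (1 / p)

lemma rpow_neg_coreSlack_mul (hp : 0 < p) (hp1 : p < 1) (hw : 0 < w) (hC' : 0 < C') (m : ℕ) :
    p ^ (-(coreSlack n p w k C' * m)) =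
      Real.exp (Real.log n * (C' * Real.log (1 / p) * m / (w ^ 2 * k ^ ((1 : ℝ) / 3)))) *
        (C' * w ^ (-(5 : ℝ)) * Real.log (1 / p) ^ 3) ^ m := by
  have hL : 0 < Real.log (1 / p) := Real.log_pos (one_lt_one_div hp hp1)
  have hlog : Real.log p = -Real.log (1 / p) := by rw [one_div, Real.log_inv, neg_neg]
  have hbase : 0 < C' * w ^ (-(5 : ℝ)) * Real.log (1 / p) ^ 3 := by positivity
  rw [← Real.exp_log (pow_pos hbase m), Real.log_pow, ← Real.exp_add, Real.rpow_def_of_pos hp,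
    hlog, coreSlack]
  congr 1
  field_simp

lemma rpow_one_third_sq {x : ℝ} (hx : 0 ≤ x) : (x ^ ((1 : ℝ) / 3)) ^ 2 = x ^ ((2 : ℝ) / 3) := by
  rw [← Real.rpow_natCast, ← Real.rpow_mul hx]
  norm_num

lemma card_isCore_le_pow_mul_choose (hp : 0 < p) (hp1 : p ≤ 1) {τ : ℝ} (hτ : 0 < τ)
    (hpn : p * n + τ ≤ w ^ 2 * k ^ ((1 : ℝ) / 3) / (C * a * Real.log (1 / p)))
    {m : ℕ} (hm : m ≠ 0) :
    #{G | IsCore n p a w C k G ∧ edgeCount G = m} ≤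
      n ^ ⌊2 * m / τ⌋₊ * (⌊2 * m / τ⌋₊.choose 2).choose m := by
  refine le_trans (card_le_card fun G hG => ?_)
    ((card_filter_edgeCount_eq_ncard_support_le hm _).trans_eq (by rw [Fintype.card_fin]))
  obtain ⟨-, hcore, hGm⟩ := mem_filter.1 hG
  refine mem_filter.2 ⟨mem_univ G, hGm, Nat.le_floor ((le_div_iff₀ hτ).2 ?_)⟩
  rw [← hGm]
  exact ncard_support_mul_le fun u hu => by linarith [hcore.le_degree hp hp1 hu]

lemma choose_choose_two_le {v m : ℕ} {y : ℝ} (hv : v ≤ y) :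
    ((v.choose 2).choose m : ℝ) ≤ (Real.exp 1 * (y ^ 2 / 2) / m) ^ m := by
  refine (choose_le_exp_one_mul_div_pow _ m).trans ?_
  gcongr
  calc ((v.choose 2 : ℕ) : ℝ) ≤ (v : ℝ) ^ 2 / Nat.factorial 2 := Nat.choose_le_pow_div 2 v
    _ ≤ y ^ 2 / 2 := by rw [Nat.factorial_two, Nat.cast_ofNat]; gcongr

lemma natCast_pow_le_exp_log_mul {n v : ℕ} {y : ℝ} (hv : v ≤ y) :
    (n : ℝ) ^ v ≤ Real.exp (Real.log n * y) := by
  rcases n.eq_zero_or_pos with rfl | hn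
  · simpa using pow_le_one₀ le_rfl zero_le_one
  · rw [← Real.rpow_natCast, Real.rpow_def_of_pos (Nat.cast_pos.2 hn)]
    have := Real.log_natCast_nonneg n
    gcongr

lemma card_isCore_le (hp : 0 < p) (hp1 : p < 1) (ha : 0 < a) (hw : 0 < w) (hC : 0 < C)
    (hk : 0 < k) (hpn : 2 * (p * n) ≤ w ^ 2 * k ^ ((1 : ℝ) / 3) / (C * a * Real.log (1 / p)))
    (hC'₁ : 4 * (C * a) ≤ C') (hC'₂ : 8 * Real.exp 1 * (C * a) ^ 3 ≤ C') {m : ℕ} (hm : m ≠ 0) :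
    (#{G | IsCore n p a w C k G ∧ edgeCount G = m} : ℝ) ≤ p ^ (-(coreSlack n p w k C' * m)) := by
  set t := k ^ ((1 : ℝ) / 3) with ht
  set L := Real.log (1 / p)
  set τ := w ^ 2 * t / (C * a * L) with hτ
  have hL0 : 0 < L := Real.log_pos (one_lt_one_div hp hp1)
  have ht0 : 0 < t := Real.rpow_pos_of_pos hk _
  have hτ0 : 0 < τ := by positivity
  have hC'0 : 0 < C' := lt_of_lt_of_le (by positivity) hC'₁
  by_cases hmB : (m : ℝ) ≤ C * a * w⁻¹ * t ^ 2 * L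
  swap
  · rw [filter_false_of_mem]
    · simpa using Real.rpow_nonneg hp.le _
    · rintro G - ⟨hG, rfl⟩
      exact hmB (by rw [ht, rpow_one_third_sq hk.le]; exact hG.2.1)
  have hv : (⌊2 * m / (τ / 2)⌋₊ : ℝ) ≤ 4 * m / τ := by
    refine (Nat.floor_le (by positivity)).trans_eq ?_
    field_simp
    norm_num
  have hvertices : 4 * m / τ ≤ C' * L * m / (w ^ 2 * t) := calc
    4 * m / τ = 4 * (C * a) * L * m / (w ^ 2 * t) := by rw [hτ]; field_simp
    _ ≤ C' * L * m / (w ^ 2 * t) := by gcongr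
  have hedges : Real.exp 1 * ((4 * m / τ) ^ 2 / 2) / m ≤ C' * w ^ (-(5 : ℝ)) * L ^ 3 := calc
    _ = 8 * Real.exp 1 * m / τ ^ 2 := by field_simp; norm_num
    _ ≤ 8 * Real.exp 1 * (C * a * w⁻¹ * t ^ 2 * L) / τ ^ 2 := by gcongr
    _ = 8 * Real.exp 1 * (C * a) ^ 3 * w ^ (-(5 : ℝ)) * L ^ 3 := by
      rw [hτ, Real.rpow_neg hw.le, show (5 : ℝ) = (5 : ℕ) by norm_num, Real.rpow_natCast]
      field_simp
    _ ≤ C' * w ^ (-(5 : ℝ)) * L ^ 3 := by gcongr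
  calc (#{G | IsCore n p a w C k G ∧ edgeCount G = m} : ℝ)
      ≤ (n : ℝ) ^ ⌊2 * m / (τ / 2)⌋₊ * (⌊2 * m / (τ / 2)⌋₊.choose 2).choose m := by
        exact_mod_cast card_isCore_le_pow_mul_choose hp hp1.le (half_pos hτ0) (by linarith) hm
    _ ≤ Real.exp (Real.log n * (C' * L * m / (w ^ 2 * t))) *
          (C' * w ^ (-(5 : ℝ)) * L ^ 3) ^ m := by
        refine mul_le_mul (natCast_pow_le_exp_log_mul (hv.trans hvertices))
          ((choose_choose_two_le hv).trans ?_) (Nat.cast_nonneg _) (Real.exp_pos _).le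
        gcongr
    _ = p ^ (-(coreSlack n p w k C' * m)) := (rpow_neg_coreSlack_mul hp hp1 hw hC'0 m).symm

lemma prob_exists_lt_edgeCount_le {P : SimpleGraph (Fin n) → Prop} {ψ M : ℝ} (hp : 0 < p)
    (hp1 : p ≤ 1) (hψ : ψ ≤ 1) (hM : 0 ≤ M)
    (hcount : ∀ m ≠ 0, (#{G | P G ∧ edgeCount G = m} : ℝ) ≤ p ^ (-(ψ * m))) :
    prob n p {H | ∃ G ≤ H, P G ∧ M < edgeCount G} ≤ n ^ 2 * p ^ (M * (1 - ψ)) := by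
  set S : Finset ℕ := {m ∈ Ioc 0 (n.choose 2) | M < m}
  have hsub : {H | ∃ G ≤ H, P G ∧ M < edgeCount G} ⊆
      ⋃ m ∈ S, ⋃ G ∈ ({G | P G ∧ edgeCount G = m} : Finset _), {H | G ≤ H} := by
    rintro H ⟨G, hGH, hPG, hMG⟩
    have hpos : 0 < edgeCount G := by exact_mod_cast hM.trans_lt hMG
    have hle : edgeCount G ≤ n.choose 2 := by
      simpa only [edgeCount_top, Fintype.card_fin] using edgeCount_mono (le_top : G ≤ ⊤)
    refine Set.mem_biUnion (mem_filter.2 ⟨mem_Ioc.2 ⟨hpos, hle⟩, hMG⟩) ?_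
    exact Set.mem_biUnion (mem_filter.2 ⟨mem_univ G, hPG, rfl⟩) hGH
  have hfixed {m : ℕ} (hm : m ∈ S) :
      prob n p (⋃ G ∈ ({G | P G ∧ edgeCount G = m} : Finset _), {H | G ≤ H}) ≤
        p ^ (M * (1 - ψ)) := by
    obtain ⟨hm0, hMm⟩ := mem_filter.1 hm
    calc _ ≤ ∑ G with P G ∧ edgeCount G = m, prob n p {H | G ≤ H} :=
          prob_biUnion_le hp.le hp1 _ _
      _ = #{G | P G ∧ edgeCount G = m} * p ^ m := by
        rw [← nsmul_eq_mul, ← sum_const]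
        refine sum_congr rfl fun G hG => ?_
        rw [prob_Ici, (mem_filter.1 hG).2.2]
      _ ≤ p ^ (-(ψ * m)) * p ^ (m : ℝ) := by
        rw [Real.rpow_natCast]
        gcongr
        exact hcount m (mem_Ioc.1 hm0).1.ne'
      _ = p ^ (m * (1 - ψ)) := by rw [← Real.rpow_add hp]; ring_nf
      _ ≤ p ^ (M * (1 - ψ)) := Real.rpow_le_rpow_of_exponent_ge hp hp1 <|
        mul_le_mul_of_nonneg_right hMm.le (sub_nonneg.2 hψ)
  have hcardS : #S ≤ n ^ 2 := calc
    #S ≤ #(Ioc 0 (n.choose 2)) := card_filter_le _ _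
    _ ≤ n ^ 2 := by rw [Nat.card_Ioc]; exact Nat.choose_le_pow n 2
  calc _ ≤ ∑ _m ∈ S, p ^ (M * (1 - ψ)) := (prob_mono hp.le hp1 hsub).trans <|
        (prob_biUnion_le hp.le hp1 _ _).trans <| sum_le_sum fun _ hm => hfixed hm
    _ = #S * p ^ (M * (1 - ψ)) := by rw [sum_const, nsmul_eq_mul]
    _ ≤ n ^ 2 * p ^ (M * (1 - ψ)) := by gcongr; exact_mod_cast hcardS

end CoreCount

section LowerBound

lemma exists_le_choose_three {n : ℕ} {K : ℝ} (hK : 0 ≤ K) (hn : K ≤ n.choose 3) :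
    ∃ m ≤ n, K ≤ m.choose 3 ∧ m ≤ (6 * K) ^ ((1 : ℝ) / 3) + 3 := by
  have hex : ∃ m : ℕ, K ≤ m.choose 3 := ⟨n, hn⟩
  refine ⟨Nat.find hex, Nat.find_min' hex hn, Nat.find_spec hex, ?_⟩
  have hX : 0 ≤ (6 * K) ^ ((1 : ℝ) / 3) := by positivity
  rcases lt_or_ge (Nat.find hex) 3 with hlt | hge
  · have : (Nat.find hex : ℝ) ≤ 3 := by exact_mod_cast hlt.le
    linarith
  · obtain ⟨j, hj⟩ := Nat.exists_eq_add_of_le' hge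
    have hmin : ((j + 2).choose 3 : ℝ) < K := not_le.1 (Nat.find_min hex (by lia))
    have hcube : j ^ 3 ≤ 6 * (j + 2).choose 3 :=
      (Nat.pow_sub_le_descFactorial (j + 2) 3).trans_eq
        (Nat.descFactorial_eq_factorial_mul_choose (j + 2) 3)
    have hj3 : (j : ℝ) ^ (3 : ℝ) ≤ 6 * K := by
      calc (j : ℝ) ^ (3 : ℝ) = (j : ℝ) ^ 3 := by exact_mod_cast Real.rpow_natCast (j : ℝ) 3
        _ ≤ 6 * (j + 2).choose 3 := by exact_mod_cast hcube
        _ ≤ 6 * K := by linarith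
    have : (j : ℝ) ≤ (6 * K) ^ ((1 : ℝ) / 3) := by
      rw [one_div]
      exact (Real.le_rpow_inv_iff_of_pos j.cast_nonneg (by positivity) three_pos).2 hj3
    rw [hj]
    push_cast
    linarith

lemma rpow_le_prob_le_triangleCount {n : ℕ} {p K : ℝ} (hp : 0 < p) (hp1 : p ≤ 1) (hK : 0 ≤ K)
    (hn : K ≤ n.choose 3) :
    p ^ (((6 * K) ^ ((1 : ℝ) / 3) + 3) ^ 2 / 2) ≤ prob n p {H | K ≤ triangleCount H} := by
  obtain ⟨m, hmn, hKm, hm⟩ := exists_le_choose_three hK hn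
  obtain ⟨s, -, hs⟩ := exists_subset_card_eq (s := (univ : Finset (Fin n))) (n := m) (by simpa)
  have hexponent : ((m.choose 2 : ℕ) : ℝ) ≤ ((6 * K) ^ ((1 : ℝ) / 3) + 3) ^ 2 / 2 := calc
    ((m.choose 2 : ℕ) : ℝ) ≤ (m : ℝ) ^ 2 / Nat.factorial 2 := Nat.choose_le_pow_div 2 m
    _ ≤ ((6 * K) ^ ((1 : ℝ) / 3) + 3) ^ 2 / 2 := by
      rw [Nat.factorial_two, Nat.cast_ofNat]
      gcongr
  calc p ^ (((6 * K) ^ ((1 : ℝ) / 3) + 3) ^ 2 / 2) ≤ p ^ ((m.choose 2 : ℕ) : ℝ) :=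
        Real.rpow_le_rpow_of_exponent_ge hp hp1 hexponent
    _ = prob n p {H | cliqueOn s ≤ H} := by
      rw [Real.rpow_natCast, prob_Ici, edgeCount_cliqueOn, hs]
    _ ≤ prob n p {H | K ≤ triangleCount H} := by
      refine prob_mono hp.le hp1 fun H hH => hKm.trans ?_
      exact_mod_cast hs ▸ choose_three_le_triangleCount hH

end LowerBound

section Comparison

lemma prob_no_small_isCore_le {n : ℕ} {p a w C C' k M : ℝ} (hp : 0 < p) (hp1 : p < 1) (ha : 0 < a)
    (hw : 0 < w) (hwa : w ≤ a) (hC : 0 < C) (hk : 0 < k)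
    (hpn : 2 * (p * n) ≤ w ^ 2 * k ^ ((1 : ℝ) / 3) / (C * a * Real.log (1 / p)))
    (hC'₁ : 4 * (C * a) ≤ C') (hC'₂ : 8 * Real.exp 1 * (C * a) ^ 3 ≤ C')
    (hψ : coreSlack n p w k C' ≤ 1) (hM : 0 ≤ M) :
    prob n p ({H | a * k ≤ triangleCount H} ∩
        {H | ¬ ∃ G ≤ H, IsCore n p a w C k G ∧ edgeCount G ≤ M}) ≤
      Real.exp 1 * p ^ (C / 3 * k ^ ((2 : ℝ) / 3)) +
        n ^ 2 * p ^ (M * (1 - coreSlack n p w k C')) := by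
  have hcover : {H | a * k ≤ triangleCount H} ∩
      {H | ¬ ∃ G ≤ H, IsCore n p a w C k G ∧ edgeCount G ≤ M} ⊆
      {H | a * k ≤ triangleCount H ∧ ¬ ∃ G ≤ H, IsSeed n p a w C k G} ∪
        {H | ∃ G ≤ H, IsCore n p a w C k G ∧ M < edgeCount G} := by
    rintro H ⟨hT, hsmall⟩
    by_cases hseed : ∃ G ≤ H, IsSeed n p a w C k G
    · obtain ⟨G, hGH, hG⟩ := hseed
      obtain ⟨G', hG'G, hG'⟩ := hG.exists_le_isCore hp hp1.le ha hw hC hk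
      have hG'H := hG'G.trans hGH
      exact Or.inr ⟨G', hG'H, hG', not_le.1 fun hle => hsmall ⟨G', hG'H, hG', hle⟩⟩
    · exact Or.inl ⟨hT, hseed⟩
  refine (prob_mono hp.le hp1.le hcover).trans ((prob_union_le hp.le hp1.le _ _).trans ?_)
  exact add_le_add (prob_no_isSeed_le hp hp1.le ha hw hwa hC.le hk)
    (prob_exists_lt_edgeCount_le hp hp1.le hψ hM fun m hm =>
      card_isCore_le hp hp1 ha hw hC hk hpn hC'₁ hC'₂ hm)

lemma sq_mul_one_add_le_rpow {x ψ : ℝ} (hx : 0 ≤ x) (hψ : 0 ≤ ψ) (hψ' : ψ ≤ 1 / 20) :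
    x ^ 2 * (1 + 13 / 10 * ψ) ≤ (x ^ 3 * (1 + 2 * ψ)) ^ ((2 : ℝ) / 3) := by
  have hψ2 := mul_nonneg hψ (sub_nonneg.2 hψ')
  have hcube : (1 + 13 / 10 * ψ) ^ 3 ≤ (1 + 2 * ψ) ^ 2 := by
    nlinarith only [hψ, hψ', hψ2, mul_nonneg hψ hψ2]
  have hpow : (x ^ 2 * (1 + 13 / 10 * ψ)) ^ 3 ≤ (x ^ 3 * (1 + 2 * ψ)) ^ 2 := by
    calc (x ^ 2 * (1 + 13 / 10 * ψ)) ^ 3 = x ^ 6 * (1 + 13 / 10 * ψ) ^ 3 := by ring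
      _ ≤ x ^ 6 * (1 + 2 * ψ) ^ 2 := by gcongr
      _ = (x ^ 3 * (1 + 2 * ψ)) ^ 2 := by ring
  refine le_of_pow_le_pow_left₀ three_ne_zero (by positivity) (hpow.trans_eq ?_)
  rw [← Real.rpow_mul_natCast (by positivity), Nat.cast_ofNat, div_mul_cancel₀ _ three_ne_zero]
  exact (Real.rpow_natCast _ 2).symm

lemma half_sq_add_three_le {x ψ M : ℝ} (hx : 10 ≤ x) (hψ : 0 ≤ ψ) (hψ' : ψ ≤ 1 / 20)
    (hxψ : 50 ≤ x * ψ) (hM : x ^ 2 * (1 + 13 / 10 * ψ) ≤ M) :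
    (x + 3) ^ 2 / 2 + 3 ≤ 1 / 2 * M * (1 - ψ) := by
  have hlinear : 1 + ψ / 5 ≤ (1 + 13 / 10 * ψ) * (1 - ψ) := by
    nlinarith only [mul_nonneg hψ (sub_nonneg.2 hψ')]
  have hgain : 10 * x ≤ x ^ 2 * (ψ / 5) := by nlinarith only [hx, hxψ]
  calc (x + 3) ^ 2 / 2 + 3 ≤ 1 / 2 * (x ^ 2 + x ^ 2 * (ψ / 5)) := by nlinarith only [hx, hgain]
    _ = 1 / 2 * (x ^ 2 * (1 + ψ / 5)) := by ring
    _ ≤ 1 / 2 * (x ^ 2 * ((1 + 13 / 10 * ψ) * (1 - ψ))) := by gcongr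
    _ = 1 / 2 * (x ^ 2 * (1 + 13 / 10 * ψ)) * (1 - ψ) := by ring
    _ ≤ 1 / 2 * M * (1 - ψ) := by
      have : 0 ≤ 1 - ψ := by linarith
      gcongr

lemma mul_rpow_add_mul_rpow_le {p b c δ r s t : ℝ} (hp : 0 < p) (hp1 : p ≤ 1) (hb : 0 ≤ b)
    (hc : 0 ≤ c) (hbδ : b * p ≤ δ / 2) (hcδ : c * p ^ 3 ≤ δ / 2) (hs : r + 1 ≤ s)
    (ht : r + 3 ≤ t) : b * p ^ s + c * p ^ t ≤ δ * p ^ r := by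
  calc b * p ^ s + c * p ^ t ≤ b * p ^ (r + 1) + c * p ^ (r + 3) := by
        gcongr ?_ * ?_ + ?_ * ?_
        · exact Real.rpow_le_rpow_of_exponent_ge hp hp1 hs
        · exact Real.rpow_le_rpow_of_exponent_ge hp hp1 ht
    _ = (b * p + c * p ^ 3) * p ^ r := by
        rw [Real.rpow_add hp, Real.rpow_add hp, Real.rpow_one, ← Real.rpow_natCast p 3,
          Nat.cast_ofNat]
        ring
    _ ≤ δ * p ^ r := by
        gcongr
        linarith

lemma prob_no_minimal_isCore_le {n : ℕ} {p a w C C' k δ : ℝ} (hp : 0 < p) (hp1 : p < 1)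
    (ha : 0 < a) (hw : 0 < w) (hwa : w ≤ a) (hk : 0 < k) (hC : 3 * (6 * a) ^ ((2 : ℝ) / 3) ≤ C)
    (hpn : 2 * (p * n) ≤ w ^ 2 * k ^ ((1 : ℝ) / 3) / (C * a * Real.log (1 / p)))
    (hC'₁ : 4 * (C * a) ≤ C') (hC'₂ : 8 * Real.exp 1 * (C * a) ^ 3 ≤ C')
    (hx : 10 ≤ (6 * a) ^ ((1 : ℝ) / 3) * k ^ ((1 : ℝ) / 3))
    (hψ : coreSlack n p w k C' ≤ 1 / 20)
    (hxψ : 50 ≤ (6 * a) ^ ((1 : ℝ) / 3) * (k ^ ((1 : ℝ) / 3) * coreSlack n p w k C'))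
    (hpδ : Real.exp 1 * p ≤ δ / 2) (hnδ : n ^ 2 * p ^ 3 ≤ δ / 2) :
    prob n p ({H | a * k ≤ triangleCount H} ∩
        {H | ¬ ∃ G ≤ H, IsCore n p a w C k G ∧
          edgeCount G ≤ 1 / 2 * (6 * a * (1 + 2 * coreSlack n p w k C') * k) ^ ((2 : ℝ) / 3)}) ≤
      δ * prob n p {H | a * k ≤ triangleCount H} := by
  rcases lt_or_ge ((n.choose 3 : ℕ) : ℝ) (a * k) with hlt | hfeasible
  · have hempty : {H : SimpleGraph (Fin n) | a * k ≤ triangleCount H} = ∅ := by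
      refine Set.eq_empty_of_forall_notMem fun H hH => hlt.not_ge (le_trans hH ?_)
      simpa only [Fintype.card_fin, Nat.cast_le] using triangleCount_le H
    rw [hempty, Set.empty_inter, prob_empty, mul_zero]
  set ψ := coreSlack n p w k C'
  set x := (6 * a) ^ ((1 : ℝ) / 3) * k ^ ((1 : ℝ) / 3) with hxdef
  rw [← mul_assoc, ← hxdef] at hxψ
  have hψ0 : 0 < ψ := (pos_iff_pos_of_mul_pos (by linarith)).1 (show 0 < x by linarith)
  have hx_rpow : x = (6 * (a * k)) ^ ((1 : ℝ) / 3) := by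
    rw [hxdef, ← Real.mul_rpow (by positivity) hk.le, mul_assoc]
  have hx_cube : x ^ 3 = 6 * (a * k) := by
    rw [hx_rpow, ← Real.rpow_mul_natCast (by positivity)]
    norm_num
  have hseed : (x + 3) ^ 2 / 2 + 1 ≤ C / 3 * k ^ ((2 : ℝ) / 3) := calc
    (x + 3) ^ 2 / 2 + 1 ≤ x ^ 2 := by nlinarith only [hx]
    _ = (6 * a) ^ ((2 : ℝ) / 3) * k ^ ((2 : ℝ) / 3) := by
      rw [hxdef, mul_pow, rpow_one_third_sq (by positivity), rpow_one_third_sq hk.le]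
    _ ≤ C / 3 * k ^ ((2 : ℝ) / 3) := by
      gcongr
      linarith
  have hcore : (x + 3) ^ 2 / 2 + 3 ≤
      1 / 2 * (6 * a * (1 + 2 * ψ) * k) ^ ((2 : ℝ) / 3) * (1 - ψ) := by
    refine half_sq_add_three_le hx hψ0.le hψ hxψ ?_
    rw [show 6 * a * (1 + 2 * ψ) * k = x ^ 3 * (1 + 2 * ψ) by rw [hx_cube]; ring]
    exact sq_mul_one_add_le_rpow (by linarith) hψ0.le hψ
  have hC0 : 0 < C := lt_of_lt_of_le (by positivity) hC
  calc _ ≤ Real.exp 1 * p ^ (C / 3 * k ^ ((2 : ℝ) / 3)) + n ^ 2 *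
          p ^ (1 / 2 * (6 * a * (1 + 2 * ψ) * k) ^ ((2 : ℝ) / 3) * (1 - ψ)) :=
        prob_no_small_isCore_le hp hp1 ha hw hwa hC0 hk hpn hC'₁ hC'₂ (by linarith) (by positivity)
    _ ≤ δ * p ^ ((x + 3) ^ 2 / 2) := mul_rpow_add_mul_rpow_le hp hp1.le (Real.exp_pos 1).le
        (by positivity) hpδ hnδ hseed hcore
    _ ≤ δ * prob n p {H | a * k ≤ triangleCount H} := by
        have : 0 ≤ δ := by linarith [mul_pos (Real.exp_pos 1) hp]
        rw [hx_rpow]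
        gcongr
        exact rpow_le_prob_le_triangleCount hp hp1.le (by positivity) hfeasible

end Comparison
section Asymptotics

variable {l C' : ℝ} {k w : ℕ → ℝ}

lemma tendsto_log_one_div_div (hl : 0 < l) :
    Tendsto (fun n : ℕ => Real.log (1 / (l / n))) atTop atTop := by
  simp only [one_div_div]
  exact Real.tendsto_log_atTop.comp (tendsto_natCast_atTop_atTop.atTop_div_const hl)

lemma tendsto_rpow_one_third_atTop (hk : ∀ n, 0 < k n) (hw : ∀ n, 0 < w n)
    (hw0 : Tendsto w atTop (nhds 0))
    (hlog : Tendsto (fun n : ℕ => Real.log n / (w n ^ 2 * k n ^ ((1 : ℝ) / 3))) atTop (nhds 0)) :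
    Tendsto (fun n => k n ^ ((1 : ℝ) / 3)) atTop atTop := by
  refine tendsto_atTop_mono' atTop ?_
    (Real.tendsto_log_atTop.comp tendsto_natCast_atTop_atTop : Tendsto (fun n : ℕ => _) _ _)
  filter_upwards [hw0.eventually_le_const one_pos, hlog.eventually_le_const one_pos] with n hw1 hle
  have hwn := hw n
  have hkn := hk n
  calc Real.log n ≤ w n ^ 2 * k n ^ ((1 : ℝ) / 3) := (div_le_one (by positivity)).1 hle
    _ ≤ k n ^ ((1 : ℝ) / 3) := mul_le_of_le_one_left (by positivity) (pow_le_one₀ hwn.le hw1)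

lemma tendsto_log_one_div_div_div (hl : 0 < l) (hk : ∀ n, 0 < k n)
    (hlog : Tendsto (fun n : ℕ => Real.log n / (w n ^ 2 * k n ^ ((1 : ℝ) / 3))) atTop (nhds 0)) :
    Tendsto (fun n : ℕ => Real.log (1 / (l / n)) / (w n ^ 2 * k n ^ ((1 : ℝ) / 3)))
      atTop (nhds 0) := by
  have hdouble := hlog.const_mul 2
  rw [mul_zero] at hdouble
  refine squeeze_zero' ?_ ?_ hdouble
  · filter_upwards [(tendsto_log_one_div_div hl).eventually_ge_atTop 0] with n hL
    have := hk n
    positivity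
  · filter_upwards [eventually_ne_atTop 0,
      (Real.tendsto_log_atTop.comp tendsto_natCast_atTop_atTop).eventually_ge_atTop (-Real.log l)]
      with n hn hlogn
    have := hk n
    rw [one_div_div, Real.log_div (Nat.cast_ne_zero.2 hn) hl.ne', ← mul_div_assoc]
    gcongr
    simp only [Function.comp_apply] at hlogn
    linarith

lemma tendsto_log_mul_rpow_neg_five_mul_div (hl : 0 < l) (hC' : 0 < C') (hw : ∀ n, 0 < w n)
    (hlogw : Tendsto (fun n : ℕ => Real.log (w n) / Real.log (1 / (l / n))) atTop (nhds 0)) :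
    Tendsto (fun n : ℕ => Real.log (C' * w n ^ (-(5 : ℝ)) * Real.log (1 / (l / n)) ^ 3) /
      Real.log (1 / (l / n))) atTop (nhds 0) := by
  have hL := tendsto_log_one_div_div hl
  have hloglog : Tendsto (fun n : ℕ => Real.log (Real.log (1 / (l / n))) / Real.log (1 / (l / n)))
      atTop (nhds 0) := Real.isLittleO_log_id_atTop.tendsto_div_nhds_zero.comp hL
  have hsum := ((hL.const_div_atTop (Real.log C')).add (hlogw.const_mul (-5))).add
    (hloglog.const_mul 3)
  simp only [mul_zero, add_zero] at hsum
  refine hsum.congr' ?_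
  filter_upwards [hL.eventually_gt_atTop 0] with n hLn
  have hwn := hw n
  rw [Real.log_mul (by positivity) (by positivity), Real.log_mul (by positivity) (by positivity),
    Real.log_rpow hwn, Real.log_pow]
  push_cast
  ring

lemma tendsto_coreSlack (hl : 0 < l) (hC' : 0 < C') (hw : ∀ n, 0 < w n)
    (hlog : Tendsto (fun n : ℕ => Real.log n / (w n ^ 2 * k n ^ ((1 : ℝ) / 3))) atTop (nhds 0))
    (hlogw : Tendsto (fun n : ℕ => Real.log (w n) / Real.log (1 / (l / n))) atTop (nhds 0)) :
    Tendsto (fun n : ℕ => coreSlack n (l / n) (w n) (k n) C') atTop (nhds 0) := by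
  have hsum := (hlog.const_mul C').add (tendsto_log_mul_rpow_neg_five_mul_div hl hC' hw hlogw)
  simpa only [coreSlack, mul_div_assoc, mul_zero, add_zero] using hsum

lemma tendsto_rpow_one_third_mul_coreSlack (hl : 0 < l) (hC' : 1 ≤ C') (hk : ∀ n, 0 < k n)
    (hw : ∀ n, 0 < w n) (hw0 : Tendsto w atTop (nhds 0)) :
    Tendsto (fun n : ℕ => k n ^ ((1 : ℝ) / 3) * coreSlack n (l / n) (w n) (k n) C')
      atTop atTop := by
  have hlogn : Tendsto (fun n : ℕ => Real.log n) atTop atTop :=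
    Real.tendsto_log_atTop.comp tendsto_natCast_atTop_atTop
  refine tendsto_atTop_mono' atTop ?_ hlogn
  filter_upwards [hw0.eventually_le_const one_pos, hlogn.eventually_ge_atTop 0,
    (tendsto_log_one_div_div hl).eventually_ge_atTop 1] with n hw1 hlog0 hL1
  have hwn := hw n
  have hkn := hk n
  have hbase : 1 ≤ C' * w n ^ (-(5 : ℝ)) * Real.log (1 / (l / n)) ^ 3 :=
    one_le_mul_of_one_le_of_one_le (one_le_mul_of_one_le_of_one_le hC'
      (Real.one_le_rpow_of_pos_of_le_one_of_nonpos hwn hw1 (by norm_num))) (one_le_pow₀ hL1)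
  have hsecond := div_nonneg (Real.log_nonneg hbase) (zero_le_one.trans hL1)
  have hw2 : w n ^ 2 ≤ C' := (pow_le_one₀ hwn.le hw1).trans hC'
  calc Real.log n ≤ C' / w n ^ 2 * Real.log n :=
        le_mul_of_one_le_left hlog0 ((one_le_div (by positivity)).2 hw2)
    _ = k n ^ ((1 : ℝ) / 3) * (C' * Real.log n / (w n ^ 2 * k n ^ ((1 : ℝ) / 3))) := by
      field_simp
    _ ≤ k n ^ ((1 : ℝ) / 3) * coreSlack n (l / n) (w n) (k n) C' := by
      rw [coreSlack]
      gcongr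
      exact le_add_of_nonneg_right hsecond

lemma eventually_two_mul_le_div (hl : 0 < l) (hk : ∀ n, 0 < k n) (hw : ∀ n, 0 < w n) {c : ℝ}
    (hc : 0 < c)
    (hlog : Tendsto (fun n : ℕ => Real.log n / (w n ^ 2 * k n ^ ((1 : ℝ) / 3))) atTop (nhds 0)) :
    ∀ᶠ n : ℕ in atTop, 2 * (l / n * n) ≤
      w n ^ 2 * k n ^ ((1 : ℝ) / 3) / (c * Real.log (1 / (l / n))) := by
  have hsmall : 0 < 1 / (2 * l * c) := by positivity
  filter_upwards [(tendsto_log_one_div_div_div hl hk hlog).eventually_le_const hsmall,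
    eventually_ne_atTop 0, (tendsto_log_one_div_div hl).eventually_gt_atTop 0] with n hle hn hL
  have hwn := hw n
  have hkn := hk n
  rw [div_mul_cancel₀ l (Nat.cast_ne_zero.2 hn), le_div_iff₀ (by positivity)]
  rw [div_le_div_iff₀ (by positivity) (by positivity)] at hle
  linarith

lemma tendsto_sq_mul_div_cube (l : ℝ) :
    Tendsto (fun n : ℕ => (n : ℝ) ^ 2 * (l / n) ^ 3) atTop (nhds 0) := by
  refine (tendsto_const_div_atTop_nhds_zero_nat (l ^ 3)).congr' ?_
  filter_upwards [eventually_ne_atTop 0] with n hn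
  field_simp

lemma eventually_prob_no_minimal_isCore_le {a C δ : ℝ} (hl : 0 < l) (ha : 0 < a) (hδ : 0 < δ)
    (hC : 3 * (6 * a) ^ ((2 : ℝ) / 3) ≤ C) (hC' : 1 ≤ C') (hC'₁ : 4 * (C * a) ≤ C')
    (hC'₂ : 8 * Real.exp 1 * (C * a) ^ 3 ≤ C') (hk : ∀ n, 0 < k n) (hw : ∀ n, 0 < w n)
    (hw0 : Tendsto w atTop (nhds 0))
    (hlog : Tendsto (fun n : ℕ => Real.log n / (w n ^ 2 * k n ^ ((1 : ℝ) / 3))) atTop (nhds 0))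
    (hlogw : Tendsto (fun n : ℕ => Real.log (w n) / Real.log (1 / (l / n))) atTop (nhds 0)) :
    ∀ᶠ n : ℕ in atTop,
      prob n (l / n) ({H | a * k n ≤ triangleCount H} ∩
          {H | ¬ ∃ G ≤ H, IsCore n (l / n) a (w n) C (k n) G ∧ edgeCount G ≤
            1 / 2 * (6 * a * (1 + 2 * coreSlack n (l / n) (w n) (k n) C') * k n) ^ ((2 : ℝ) / 3)}) ≤
        δ * prob n (l / n) {H | a * k n ≤ triangleCount H} := by
  have hb : 0 < (6 * a) ^ ((1 : ℝ) / 3) := by positivity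
  have hC0 : 0 < C := lt_of_lt_of_le (by positivity) hC
  have hp := tendsto_const_div_atTop_nhds_zero_nat l
  have hx := (tendsto_rpow_one_third_atTop hk hw hw0 hlog).const_mul_atTop hb
  have hψ := tendsto_coreSlack hl (zero_lt_one.trans_le hC') hw hlog hlogw
  have hxψ := (tendsto_rpow_one_third_mul_coreSlack hl hC' hk hw hw0).const_mul_atTop hb
  filter_upwards [eventually_gt_atTop 0, hp.eventually_lt_const one_pos,
    hw0.eventually_le_const ha, eventually_two_mul_le_div hl hk hw (mul_pos hC0 ha) hlog,
    hx.eventually_ge_atTop 10, hψ.eventually_le_const (by norm_num : (0 : ℝ) < 1 / 20),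
    hxψ.eventually_ge_atTop 50,
    hp.eventually_le_const (div_pos (half_pos hδ) (Real.exp_pos 1)),
    (tendsto_sq_mul_div_cube l).eventually_le_const (half_pos hδ)]
    with n hn hp1 hwa hpn hxn hψn hxψn hpδ hnδ
  exact prob_no_minimal_isCore_le (by positivity) hp1 ha (hw n) hwa (hk n) hC hpn hC'₁ hC'₂
    hxn hψn hxψn ((le_div_iff₀' (Real.exp_pos 1)).1 hpδ) hnδ

end Asymptotics

/-- **Unlikely not to have a `2ψ_n`-minimal core.** -/
theorem unlikely_no_minimal_core (l a δ : ℝ) (hl : 0 < l) (ha : 0 < a) (hδ : 0 < δ) :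
    ∃ C C' : ℝ, 0 < C ∧ 0 < C' ∧
      ∀ k w : ℕ → ℝ, (∀ n, 0 < k n) → (∀ n, 0 < w n) →
        Tendsto w atTop (nhds 0) →
        Tendsto (fun n : ℕ => Real.log n / ((w n) ^ 2 * (k n) ^ ((1 : ℝ) / 3))) atTop (nhds 0) →
        Tendsto (fun n : ℕ => Real.log (w n) / Real.log (1 / (l / n))) atTop (nhds 0) →
        ∃ n₀ : ℕ, ∀ n ≥ n₀,
          prob n (l / n)
              ({H | a * k n ≤ (triangleCount H : ℝ)} ∩
                {H | ¬ ∃ G', G' ≤ H ∧ IsCore n (l / n) a (w n) C (k n) G' ∧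
                    (edgeCount G' : ℝ) ≤
                      (1 / 2) * (6 * a * (1 + 2 *
                        (C' * Real.log n / ((w n) ^ 2 * (k n) ^ ((1 : ℝ) / 3)) +
                          Real.log (C' * (w n) ^ (-(5 : ℝ)) * (Real.log (1 / (l / n))) ^ 3) /
                            Real.log (1 / (l / n)))) * k n) ^ ((2 : ℝ) / 3)}) ≤
            δ * prob n (l / n) {H | a * k n ≤ (triangleCount H : ℝ)} := by
  -- With this `C`, having no seed costs twice the exponent `(6 a k) ^ (2 / 3) / 2` of a clique.
  set C := 3 * (6 * a) ^ ((2 : ℝ) / 3)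
  set C' := 1 + 4 * (C * a) + 8 * Real.exp 1 * (C * a) ^ 3
  have hC : 0 < C := by positivity
  have hlinear : 0 < 4 * (C * a) := by positivity
  have hcubic : 0 < 8 * Real.exp 1 * (C * a) ^ 3 := by positivity
  refine ⟨C, C', hC, by positivity, fun k w hk hw hw0 hlog hlogw => eventually_atTop.1 ?_⟩
  exact eventually_prob_no_minimal_isCore_le hl ha hδ le_rfl (by linarith) (by linarith)
    (by linarith) hk hw hw0 hlog hlogw
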